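/- Let k ≥ 2 and s ≥ 0, and let M be an ordered k-uniform matching with e edges on vertex set {1,...,ke} that is contained in G_s^k (i.e., there is an injective, order-preserving map from the vertices of M to the vertices of G_s^k sending edges of M to edges of G_s^k). Then M is k-nestable. -/

import Mathlib

/-- An ordered hypergraph with vertex set `{1, …, n}` (with its natural order)
and edges given as finite sets of vertices. -/
structure OrderedHypergraph where
  n : ℕ
  edges : Finset (Finset ℕ)

/-- An ordered hypergraph `G` is contained in an ordered hypergraph `H` if there is an
injective, order-preserving map from the vertices of `G` to the vertices of `H` such that
edges of `G` map to edges of `H`. -/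
def OrderedHypergraph.Contains (H G : OrderedHypergraph) : Prop :=
  ∃ f : ℕ → ℕ, StrictMono f ∧ (∀ v ∈ Finset.Icc 1 G.n, f v ∈ Finset.Icc 1 H.n) ∧
    ∀ A ∈ G.edges, A.image f ∈ H.edges

/-- The complete `k`-uniform ordered hypergraph `K_N^k` on the vertex set `{1, …, N}`. -/
def completeHG (k N : ℕ) : OrderedHypergraph :=
  ⟨N, Finset.powersetCard k (Finset.Icc 1 N)⟩

/-- The `i`-colored subgraph of `K_N^k` under the coloring `c`. -/
def coloredSubgraph (k N : ℕ) {t : ℕ} (c : Finset ℕ → Fin t) (i : Fin t) : OrderedHypergraph :=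
  ⟨N, (Finset.powersetCard k (Finset.Icc 1 N)).filter fun A => c A = i⟩

/-- The ordered Ramsey number `OR(G 0, …, G (t-1))` of `k`-uniform ordered hypergraphs:
the minimum `N` such that every `t`-coloring of the edges of `K_N^k` contains, for some
color `i`, a copy of `G i` in the `i`-colored subgraph. -/
noncomputable def ORnum (k : ℕ) {t : ℕ} (G : Fin t → OrderedHypergraph) : ℕ :=
  sInf {N | ∀ c : Finset ℕ → Fin t, ∃ i, (coloredSubgraph k N c i).Contains (G i)}

/-- The `(k,ℓ)`-path `P_e^{k,ℓ}` with `e` edges: the ordered `k`-uniform hypergraph on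
vertex set `{1, …, e(k-ℓ)+ℓ}` with edges `A_r = {(r-1)(k-ℓ)+1, …, (r-1)(k-ℓ)+k}`. -/
def loosePath (k l e : ℕ) : OrderedHypergraph :=
  ⟨e * (k - l) + l,
    (Finset.range e).image fun r => Finset.Icc (r * (k - l) + 1) (r * (k - l) + k)⟩


/-- The ordered `k`-uniform hypergraph `G_s^k`, defined iteratively: `G_0^k` is a single
vertex with no edges, and `G_{s+1}^k` (on vertex set `{1, …, k^{s+1}}`) consists of `k`
disjoint consecutive copies of `G_s^k` (copy `j` occupying `{j·k^s + 1, …, (j+1)·k^s}`)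
together with every `k`-element edge having exactly one vertex in each copy. -/
def iterGraph (k : ℕ) : ℕ → OrderedHypergraph
  | 0 => ⟨1, ∅⟩
  | s + 1 =>
      ⟨k ^ (s + 1),
        ((Finset.range k).biUnion fun j =>
            (iterGraph k s).edges.image fun A => A.image fun x => x + j * k ^ s) ∪
          (Finset.powersetCard k (Finset.Icc 1 (k ^ (s + 1)))).filter fun A =>
            ∀ j ∈ Finset.range k,
              (A ∩ Finset.Icc (j * k ^ s + 1) ((j + 1) * k ^ s)).card = 1⟩

/-- `M` is an ordered `k`-uniform matching: each edge is a `k`-element subset of the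
vertex set `{1, …, M.n}`, and the edges are pairwise disjoint. -/
def IsOrderedMatching (k : ℕ) (M : OrderedHypergraph) : Prop :=
  (∀ A ∈ M.edges, A.card = k ∧ A ⊆ Finset.Icc 1 M.n) ∧
    ∀ A ∈ M.edges, ∀ B ∈ M.edges, A ≠ B → Disjoint A B

/-- The support (vertex set) of a set of edges: the union of the edges. -/
def edgeSupport (E : Finset (Finset ℕ)) : Finset ℕ := E.sup id

/-- A set of edges `E` (of an ordered `k`-uniform matching) is `k`-nestable:  either it
is empty, or there are `k` disjoint consecutive intervals `I 0 < I 1 < ⋯ < I (k-1)` of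
the support (some possibly empty or degenerate) spanning the support, the first
containing the least vertex and the last containing the greatest vertex, such that every
edge is either contained in one of the intervals or has exactly one vertex in each
interval, and for each `j` the set of edges contained in `I j` is itself `k`-nestable. -/
inductive KNestable (k : ℕ) : Finset (Finset ℕ) → Prop where
  | empty : KNestable k ∅
  | nest (E : Finset (Finset ℕ)) (hk : 0 < k) (I : Fin k → Finset ℕ)
      (hord : ∀ j j' : Fin k, j < j' → ∀ x ∈ I j, ∀ y ∈ I j', x < y)
      (hspan : edgeSupport E = Finset.univ.biUnion fun j => I j)
      (hint : ∀ j : Fin k, ∀ x ∈ I j, ∀ y ∈ I j, ∀ z ∈ edgeSupport E,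
        x ≤ z → z ≤ y → z ∈ I j)
      (hfirst : ∀ x ∈ edgeSupport E, ∃ y ∈ I ⟨0, hk⟩, y ≤ x)
      (hlast : ∀ x ∈ edgeSupport E, ∃ y ∈ I ⟨k - 1, Nat.sub_lt hk Nat.one_pos⟩, x ≤ y)
      (hedges : ∀ A ∈ E, (∃ j, A ⊆ I j) ∨ ∀ j, (A ∩ I j).card = 1)
      (hrec : ∀ j : Fin k, KNestable k (E.filter fun A => A ⊆ I j)) :
      KNestable k E

/-!
Colour a vertex of `G_{s+1}^k` by the index of the copy of `G_s^k` containing it.  This colouring is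
monotone, and every edge is either monochromatic (it lies in one copy) or rainbow (it meets each
copy in exactly one vertex).  Pulled back to a hypergraph contained in `G_{s+1}^k`, its colour
classes of vertices are the intervals required for nestability, except that the first or the last
of them may be empty.  If so, no edge is rainbow, and the least and greatest colours in use may be
renamed to the first and last colour without changing the colour classes, unless only one colour is
in use.  In that case the whole hypergraph is contained in one copy of `G_s^k`, and induction on `s`
applies.
-/

section EdgeSupport

variable {E : Finset (Finset ℕ)}

theorem mem_edgeSupport {x : ℕ} : x ∈ edgeSupport E ↔ ∃ A ∈ E, x ∈ A :=
  Finset.mem_sup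

theorem subset_edgeSupport {A : Finset ℕ} (hA : A ∈ E) : A ⊆ edgeSupport E :=
  Finset.le_sup (f := id) hA

theorem edgeSupport_mono : Monotone edgeSupport :=
  fun _ _ h => Finset.sup_mono h

end EdgeSupport

section Stretch

variable {α : Type*} [LinearOrder α] [BoundedOrder α] {a b : α}

/-- The monotone map sending everything up to `a` to `⊥`, everything from `b` on to `⊤`, and
fixing the elements in between.  It renames the colours of a colouring with least colour `a` and
greatest colour `b` so that the two extreme colours are attained. -/
def stretch (a b i : α) : α :=
  if i ≤ a then ⊥ else if b ≤ i then ⊤ else i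

theorem stretch_left : stretch a b a = ⊥ :=
  if_pos le_rfl

theorem stretch_right (hab : a < b) : stretch a b b = ⊤ := by
  rw [stretch, if_neg hab.not_ge, if_pos le_rfl]

theorem stretch_bot_top (i : α) : stretch ⊥ ⊤ i = i := by
  unfold stretch
  split_ifs with hbot htop
  · exact (le_bot_iff.1 hbot).symm
  · exact (top_le_iff.1 htop).symm
  · rfl

theorem stretch_monotone : Monotone (stretch a b) := by
  intro i j hij
  unfold stretch
  grind [bot_le, le_top]

theorem stretch_injOn (hab : a < b) : Set.InjOn (stretch a b) (Set.Icc a b) := by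
  rintro i ⟨hai, hib⟩ j ⟨haj, hjb⟩ hij
  have hbot : ⊥ ≤ a := bot_le
  have htop : b ≤ ⊤ := le_top
  unfold stretch at hij
  grind

end Stretch

section Coloring

variable {ι : Type*} [DecidableEq ι] {k : ℕ} {E : Finset (Finset ℕ)}

/-- The edge `A` is rainbow under the colouring `c`: each colour occurs exactly once on `A`. -/
def IsRainbow (c : ℕ → ι) (A : Finset ℕ) : Prop :=
  ∀ j, (A.filter fun x => c x = j).card = 1

theorem IsRainbow.exists_eq {c : ℕ → ι} {A : Finset ℕ} (hA : IsRainbow c A) (j : ι) :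
    ∃ x ∈ A, c x = j := by
  obtain ⟨x, hx⟩ := Finset.card_pos.1 (Nat.one_pos.trans_eq (hA j).symm)
  exact ⟨x, Finset.mem_filter.1 hx⟩

theorem isRainbow_image_iff {c : ℕ → ι} {f : ℕ → ℕ} {A : Finset ℕ} (hf : Set.InjOn f A) :
    IsRainbow c (A.image f) ↔ IsRainbow (c ∘ f) A := by
  refine forall_congr' fun j => ?_
  rw [Finset.filter_image, Finset.card_image_of_injOn (hf.mono (Finset.filter_subset _ _))]
  rfl

/-- The edges of `E` all of whose vertices have colour `j` under `c`. -/
def colorClass (c : ℕ → ι) (E : Finset (Finset ℕ)) (j : ι) : Finset (Finset ℕ) :=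
  E.filter fun A => ∀ x ∈ A, c x = j

theorem mem_colorClass {c : ℕ → ι} {j : ι} {A : Finset ℕ} :
    A ∈ colorClass c E j ↔ A ∈ E ∧ ∀ x ∈ A, c x = j :=
  Finset.mem_filter

theorem KNestable.empty_notMem (hE : KNestable k E) : ∅ ∉ E := by
  induction hE with
  | empty => exact Finset.notMem_empty ∅
  | nest E hk I _ _ _ _ _ _ _ ih =>
    exact fun h => ih ⟨0, hk⟩ (Finset.mem_filter.2 ⟨h, Finset.empty_subset _⟩)

theorem subset_filter_edgeSupport_iff {c : ℕ → ι} {A : Finset ℕ} (hA : A ∈ E) (j : ι) :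
    A ⊆ (edgeSupport E).filter (c · = j) ↔ ∀ x ∈ A, c x = j :=
  ⟨fun h _ hx => (Finset.mem_filter.1 (h hx)).2,
    fun h x hx => Finset.mem_filter.2 ⟨subset_edgeSupport hA hx, h x hx⟩⟩

theorem exists_eq_bot_and_le {α β : Type*} [LinearOrder α] [PartialOrder β] [OrderBot β]
    {f : α → β} {S : Set α} (hf : MonotoneOn f S) (hbot : ∃ y ∈ S, f y = ⊥) {x : α} (hx : x ∈ S) :
    ∃ y ∈ S, f y = ⊥ ∧ y ≤ x := by
  obtain ⟨y, hy, hy_bot⟩ := hbot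
  rcases le_total y x with hyx | hxy
  · exact ⟨y, hy, hy_bot, hyx⟩
  · exact ⟨x, hx, le_bot_iff.1 (hy_bot ▸ hf hx hy hxy), le_rfl⟩

theorem KNestable.of_coloring_attaining_bot_top [NeZero k] {c : ℕ → Fin k}
    (hc : MonotoneOn c (edgeSupport E))
    (hbot : ∃ x ∈ edgeSupport E, c x = ⊥) (htop : ∃ x ∈ edgeSupport E, c x = ⊤)
    (hedges : ∀ A ∈ E, (∃ j, ∀ x ∈ A, c x = j) ∨ IsRainbow c A)
    (hclass : ∀ j, KNestable k (colorClass c E j)) : KNestable k E := by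
  refine .nest E (NeZero.pos k) (fun j => (edgeSupport E).filter (c · = j))
    ?hord ?hspan ?hint ?hfirst ?hlast ?hedges ?hrec
  case hord =>
    intro i j hij x hx y hy
    obtain ⟨hx_mem, rfl⟩ := Finset.mem_filter.1 hx
    obtain ⟨hy_mem, rfl⟩ := Finset.mem_filter.1 hy
    exact hc.reflect_lt hx_mem hy_mem hij
  case hspan =>
    exact (Finset.biUnion_filter_eq_of_maps_to fun _ _ => Finset.mem_univ _).symm
  case hint =>
    intro j x hx y hy z hz hxz hzy
    obtain ⟨hx, hxj⟩ := Finset.mem_filter.1 hx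
    obtain ⟨hy, hyj⟩ := Finset.mem_filter.1 hy
    exact Finset.mem_filter.2 ⟨hz, le_antisymm (hyj ▸ hc hz hy hzy) (hxj ▸ hc hx hz hxz)⟩
  case hfirst =>
    intro x hx
    obtain ⟨y, hy, hy_bot, hyx⟩ := exists_eq_bot_and_le hc hbot hx
    exact ⟨y, Finset.mem_filter.2 ⟨hy, hy_bot⟩, hyx⟩
  case hlast =>
    intro x hx
    obtain ⟨y, hy, hy_top, hxy⟩ := exists_eq_bot_and_le hc.dual htop hx
    exact ⟨y, Finset.mem_filter.2 ⟨hy, hy_top⟩, hxy⟩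
  case hedges =>
    refine fun A hA => (hedges A hA).imp ?_ fun hrainbow j => ?_
    · exact Exists.imp fun j => (subset_filter_edgeSupport_iff hA j).2
    · rw [Finset.inter_filter, Finset.inter_eq_left.2 (subset_edgeSupport hA)]
      exact hrainbow j
  case hrec =>
    intro j
    rw [Finset.filter_congr fun A hA => subset_filter_edgeSupport_iff hA j]
    exact hclass j

theorem kNestable_colorClass_comp {κ : Type*} [DecidableEq κ] {c : ℕ → ι} {g : ι → κ}
    (hg : Set.InjOn g (c '' edgeSupport E)) (hclass : ∀ j, KNestable k (colorClass c E j))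
    (j : κ) : KNestable k (colorClass (g ∘ c) E j) := by
  by_cases hj : ∃ x ∈ edgeSupport E, g (c x) = j
  · obtain ⟨x, hx, rfl⟩ := hj
    suffices h : colorClass (g ∘ c) E (g (c x)) = colorClass c E (c x) from h ▸ hclass (c x)
    refine Finset.filter_congr fun A hA => forall₂_congr fun y hy => ?_
    exact hg.eq_iff (Set.mem_image_of_mem c (subset_edgeSupport hA hy)) (Set.mem_image_of_mem c hx)
  · suffices h : colorClass (g ∘ c) E j = ∅ from h ▸ .empty
    refine Finset.filter_eq_empty_iff.2 fun A hA hAj => ?_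
    rcases A.eq_empty_or_nonempty with rfl | ⟨x, hx⟩
    · exact (hclass (c 0)).empty_notMem (mem_colorClass.2 ⟨hA, by simp⟩)
    · exact hj ⟨x, subset_edgeSupport hA hx, hAj x hx⟩

theorem KNestable.of_coloring {c : ℕ → Fin k} (hc : MonotoneOn c (edgeSupport E))
    (hedges : ∀ A ∈ E, (∃ j, ∀ x ∈ A, c x = j) ∨ IsRainbow c A)
    (hclass : ∀ j, KNestable k (colorClass c E j)) : KNestable k E := by
  have : NeZero k := ⟨(c 0).pos.ne'⟩
  by_cases hconst : ∃ j, ∀ x ∈ edgeSupport E, c x = j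
  · obtain ⟨j, hj⟩ := hconst
    suffices h : colorClass c E j = E from h ▸ hclass j
    exact Finset.filter_true_of_mem fun A hA x hx => hj x (subset_edgeSupport hA hx)
  have hne : (edgeSupport E).Nonempty := by
    rw [Finset.nonempty_iff_ne_empty]
    exact fun h => hconst ⟨c 0, by simp [h]⟩
  obtain ⟨x, hx, hx_min⟩ := (edgeSupport E).exists_min_image c hne
  obtain ⟨y, hy, hy_max⟩ := (edgeSupport E).exists_max_image c hne
  have hxy : c x < c y := (hx_min y hy).lt_of_ne fun h =>
    hconst ⟨c x, fun z hz => le_antisymm (h ▸ hy_max z hz) (hx_min z hz)⟩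
  refine .of_coloring_attaining_bot_top (c := stretch (c x) (c y) ∘ c)
    (stretch_monotone.comp_monotoneOn hc) ⟨x, hx, stretch_left⟩ ⟨y, hy, stretch_right hxy⟩
    (fun A hA => (hedges A hA).imp ?_ fun hrainbow => ?_)
    (kNestable_colorClass_comp ?_ hclass)
  · exact fun ⟨j, hj⟩ => ⟨stretch (c x) (c y) j, fun z hz => congrArg _ (hj z hz)⟩
  · obtain ⟨u, hu, hu_bot⟩ := hrainbow.exists_eq ⊥
    obtain ⟨v, hv, hv_top⟩ := hrainbow.exists_eq ⊤
    have hx_bot : c x = ⊥ := le_bot_iff.1 (hu_bot ▸ hx_min u (subset_edgeSupport hA hu))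
    have hy_top : c y = ⊤ := top_le_iff.1 (hv_top ▸ hy_max v (subset_edgeSupport hA hv))
    simpa only [IsRainbow, hx_bot, hy_top, Function.comp_apply, stretch_bot_top] using hrainbow
  · refine (stretch_injOn hxy).mono ?_
    rintro _ ⟨z, hz, rfl⟩
    exact ⟨hx_min z hz, hy_max z hz⟩

end Coloring

section IterGraph

variable {k s : ℕ}

theorem mem_edges_iterGraph_succ {A : Finset ℕ} :
    A ∈ (iterGraph k (s + 1)).edges ↔
      (∃ j : Fin k, ∃ B ∈ (iterGraph k s).edges, B.image (· + j * k ^ s) = A) ∨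
        A ∈ Finset.powersetCard k (Finset.Icc 1 (k ^ (s + 1))) ∧
          ∀ j : Fin k, (A ∩ Finset.Icc (j * k ^ s + 1) ((j + 1) * k ^ s)).card = 1 := by
  simp [iterGraph, Fin.exists_iff, Fin.forall_iff]

theorem edges_iterGraph_subset_powersetCard :
    (iterGraph k s).edges ⊆ Finset.powersetCard k (Finset.Icc 1 (k ^ s)) := by
  induction s with
  | zero => exact Finset.empty_subset _
  | succ s ih =>
    intro A hA
    rcases mem_edges_iterGraph_succ.1 hA with ⟨j, B, hB, rfl⟩ | ⟨hA, -⟩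
    · obtain ⟨hB_subset, hB_card⟩ := Finset.mem_powersetCard.1 (ih hB)
      refine Finset.mem_powersetCard.2
        ⟨Finset.image_subset_iff.2 fun x hx => Finset.mem_Icc.2 ?_, ?_⟩
      · obtain ⟨hx_pos, hx_le⟩ := Finset.mem_Icc.1 (hB_subset hx)
        refine ⟨hx_pos.trans (Nat.le_add_right _ _), ?_⟩
        calc x + j * k ^ s ≤ k ^ s + j * k ^ s := Nat.add_le_add_right hx_le _
          _ = (j + 1) * k ^ s := by ring
          _ ≤ k * k ^ s := Nat.mul_le_mul_right _ j.isLt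
          _ = k ^ (s + 1) := (pow_succ' k s).symm
      · rw [Finset.card_image_of_injective _ (add_left_injective _), hB_card]
    · exact hA

theorem subset_Icc_of_mem_edges_iterGraph {A : Finset ℕ} (hA : A ∈ (iterGraph k s).edges) :
    A ⊆ Finset.Icc 1 (k ^ s) :=
  (Finset.mem_powersetCard.1 (edges_iterGraph_subset_powersetCard hA)).1

theorem card_of_mem_edges_iterGraph {A : Finset ℕ} (hA : A ∈ (iterGraph k s).edges) :
    A.card = k :=
  (Finset.mem_powersetCard.1 (edges_iterGraph_subset_powersetCard hA)).2

/-- The index of the copy of `G_s^k` inside `G_{s+1}^k` that contains the vertex `y`, counted from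
`0`.  Outside the vertex set `{1, …, k^(s+1)}` the value is meaningless. -/
def copyIndex (k s : ℕ) [NeZero k] (y : ℕ) : Fin k :=
  Fin.ofNat k ((y - 1) / k ^ s)

variable [NeZero k]

theorem val_copyIndex {y : ℕ} (hy : y ∈ Finset.Icc 1 (k ^ (s + 1))) :
    (copyIndex k s y : ℕ) = (y - 1) / k ^ s := by
  refine Nat.mod_eq_of_lt (Nat.div_lt_of_lt_mul ?_)
  rw [← pow_succ]
  grind

theorem copyIndex_monotoneOn : MonotoneOn (copyIndex k s) (Finset.Icc 1 (k ^ (s + 1))) := by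
  intro x hx y hy hxy
  rw [Fin.le_def, val_copyIndex hx, val_copyIndex hy]
  exact Nat.div_le_div_right (Nat.sub_le_sub_right hxy 1)

theorem copyIndex_eq_iff {y : ℕ} (hy : y ∈ Finset.Icc 1 (k ^ (s + 1))) {j : Fin k} :
    copyIndex k s y = j ↔ y ∈ Finset.Icc (j * k ^ s + 1) ((j + 1) * k ^ s) := by
  have hpos : 0 < k ^ s := pow_pos (NeZero.pos k) s
  have hy_pos : 1 ≤ y := (Finset.mem_Icc.1 hy).1
  rw [Fin.ext_iff, val_copyIndex hy, Nat.div_eq_iff hpos, Finset.mem_Icc, add_one_mul]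
  omega

theorem monochromatic_or_isRainbow_copyIndex {A : Finset ℕ}
    (hA : A ∈ (iterGraph k (s + 1)).edges) :
    (∃ j : Fin k, (∀ y ∈ A, copyIndex k s y = j) ∧
      A.image (· - j * k ^ s) ∈ (iterGraph k s).edges) ∨ IsRainbow (copyIndex k s) A := by
  have hA_subset := subset_Icc_of_mem_edges_iterGraph hA
  refine (mem_edges_iterGraph_succ.1 hA).imp ?_ fun ⟨_, hcard⟩ j => ?_
  · rintro ⟨j, B, hB, rfl⟩
    refine ⟨j, fun y hy => (copyIndex_eq_iff (hA_subset hy)).2 ?_, ?_⟩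
    · obtain ⟨x, hx, rfl⟩ := Finset.mem_image.1 hy
      have hx_mem := Finset.mem_Icc.1 (subset_Icc_of_mem_edges_iterGraph hB hx)
      rw [Finset.mem_Icc, add_one_mul]
      omega
    · simpa [Finset.image_image, Function.comp_def] using hB
  · rw [Finset.filter_congr fun y hy => copyIndex_eq_iff (hA_subset hy), Finset.filter_mem_eq_inter]
    exact hcard j

theorem image_sub_mem_edges_iterGraph (hk : 2 ≤ k) {A : Finset ℕ} {j : Fin k}
    (hA : A ∈ (iterGraph k (s + 1)).edges) (hj : ∀ y ∈ A, copyIndex k s y = j) :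
    A.image (· - j * k ^ s) ∈ (iterGraph k s).edges := by
  have hA_card : A.card = k := card_of_mem_edges_iterGraph hA
  rcases monochromatic_or_isRainbow_copyIndex hA with ⟨i, hi, hmem⟩ | hrainbow
  · obtain ⟨y, hy⟩ : A.Nonempty := Finset.card_pos.1 (hA_card ▸ NeZero.pos k)
    rwa [← hj y hy, hi y hy]
  · have hcard_one := hrainbow j
    rw [Finset.filter_true_of_mem hj] at hcard_one
    omega

end IterGraph

theorem matching_in_iterGraph_nestable_general {k s : ℕ} (hk : 2 ≤ k) {E : Finset (Finset ℕ)}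
    {f : ℕ → ℕ} (hf : StrictMonoOn f (edgeSupport E))
    (hE : ∀ A ∈ E, A.image f ∈ (iterGraph k s).edges) : KNestable k E := by
  induction s generalizing E f with
  | zero =>
    obtain rfl : E = ∅ :=
      Finset.eq_empty_of_forall_notMem fun A hA => Finset.notMem_empty _ (hE A hA)
    exact .empty
  | succ s ih =>
    have : NeZero k := ⟨by omega⟩
    have hf_maps : ∀ x ∈ edgeSupport E, f x ∈ Finset.Icc 1 (k ^ (s + 1)) := by
      intro x hx
      obtain ⟨A, hA, hxA⟩ := mem_edgeSupport.1 hx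
      exact subset_Icc_of_mem_edges_iterGraph (hE A hA) (Finset.mem_image_of_mem f hxA)
    refine .of_coloring (c := copyIndex k s ∘ f)
      (copyIndex_monotoneOn.comp hf.monotoneOn hf_maps) (fun A hA => ?_) fun j => ?_
    · refine (monochromatic_or_isRainbow_copyIndex (hE A hA)).imp ?_ ?_
      · exact fun ⟨j, hj, _⟩ => ⟨j, Finset.forall_mem_image.1 hj⟩
      · exact (isRainbow_image_iff (hf.injOn.mono (subset_edgeSupport hA))).1
    · refine ih (f := fun x => f x - j * k ^ s) ?_ fun A hA => ?_
      · intro x hx y hy hxy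
        have hsupp : edgeSupport (colorClass (copyIndex k s ∘ f) E j) ⊆ edgeSupport E :=
          edgeSupport_mono (Finset.filter_subset _ _)
        obtain ⟨A, hA, hyA⟩ := mem_edgeSupport.1 hy
        have hfy := Finset.mem_Icc.1 <|
          (copyIndex_eq_iff (hf_maps y (hsupp hy))).1 ((mem_colorClass.1 hA).2 y hyA)
        have hfxy : f x < f y := hf (hsupp hx) (hsupp hy) hxy
        change f x - j * k ^ s < f y - j * k ^ s
        omega
      · obtain ⟨hA, hAj⟩ := mem_colorClass.1 hA
        simpa only [Finset.image_image, Function.comp_def] using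
          image_sub_mem_edges_iterGraph hk (hE A hA) (Finset.forall_mem_image.2 hAj)

/-- For `k ≥ 2` and `s ≥ 0`, any ordered `k`-uniform matching `M`
with `e` edges on vertex set `{1, …, ke}` (which its edges partition) that is contained
in `G_s^k` is `k`-nestable. -/
theorem matching_in_iterGraph_nestable (k s e : ℕ) (hk : 2 ≤ k)
    (M : OrderedHypergraph) (hn : M.n = k * e) (hecard : M.edges.card = e)
    (huniform : ∀ A ∈ M.edges, A.card = k)
    (hdisj : ∀ A ∈ M.edges, ∀ B ∈ M.edges, A ≠ B → Disjoint A B)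
    (hsupp : edgeSupport M.edges = Finset.Icc 1 (k * e))
    (hcont : (iterGraph k s).Contains M) :
    KNestable k M.edges := by
  obtain ⟨f, hf, -, hedges⟩ := hcont
  exact matching_in_iterGraph_nestable_general hk (hf.strictMonoOn _) hedges
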